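/- Let n ≥ 2 and n' = n/(n−1). There is a constant c depending only on n such that for every f ∈ C_c^∞(ℝⁿ) and every x ∈ ℝⁿ, M_{n',1}f(x) ≤ c · I₁(|∇f|)(x), where M_{n',1}f(x) = sup over cubes Q ∋ x of |Q|^{−1/n'} · ‖f·χ_Q‖_{L^{n',1}(dx)}. -/

import Mathlib

/-!
Fix a cube `Q ∋ x` of side `h` and put `R = n h`, so that `Q ⊆ B(x, R)`. With a smooth cutoff `η`
equal to `1` on `B(x, R)`, supported in `B(x, 2R)` and with `|∇η| ≤ L / R`, the function `f χ_Q` is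
dominated by `u = η f`, and two estimates give the result.

* The Lorentz form of the Gagliardo–Nirenberg–Sobolev inequality,
  `∫₀^∞ |{|u| > t}|^{1/n'} dt ≤ C ∫ |∇u|` (`exists_lorentz_sobolev`). It follows from the ordinary
  inequality `‖v‖_{n'} ≤ A ‖∇v‖₁` by truncation: apply it to `v = ψ(2u/t)`, where `ψ` is a
  smooth profile vanishing on `[-1, 1]` and equal to `1` off `(-2, 2)`. This bounds
  `|{|u| > t}|^{1/n'}` by `(C/t) ∫_{t/2 ≤ |u| ≤ t} |∇u|`, and integrating in `t` gives the claim
  because `∫_{|u|}^{2|u|} dt/t` is bounded.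
* The mean value bound `∫_{B(x,R)} |f| ≤ C Rⁿ I₁(|∇f|)(x)` (`lintegral_ball_enorm_le`). Here
  `|f(z)| ≤ ∫₀^∞ |∇f(z + tω)| dt` is averaged over `z ∈ B(x, R)` and `ω` in the unit ball. For
  `t ≤ R` the integral over `z` is at most `∫_{B(x,2R)} |∇f|`; for `t > R` the integral over `ω` is
  at most `t^{-n} ∫_{B(x,2t)} |∇f|`, and `∫_{t ≥ |x-w|/2} t^{-n} dt` is a multiple of
  `|x-w|^{-(n-1)}` at most.

Since `|∇u| ≤ |∇f| + (L/R)|f|` on `B(x, 2R)` and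
`∫_{B(x,2R)} |∇f| ≤ (2R)^{n-1} I₁(|∇f|)(x)`, the Lorentz norm of `f χ_Q` is at most
`C R^{n-1} I₁(|∇f|)(x)`, while `|Q|^{1/n'} = h^{n-1}`.
-/

open MeasureTheory ENNReal Filter Set

noncomputable section

/-- `ℝⁿ` with the Euclidean structure. -/
abbrev En (n : ℕ) := EuclideanSpace ℝ (Fin n)

/-- Axis-parallel closed cube with corner `a` and side length `h`. -/
def cube {n : ℕ} (a : En n) (h : ℝ) : Set (En n) := {y | ∀ i, a i ≤ y i ∧ y i ≤ a i + h}

/-- Riesz potential of order `1` of a (nonnegative) function: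
`I₁ g (x) = ∫ g(y) |x-y|^{-(n-1)} dy`. -/
def riesz (n : ℕ) (g : En n → ℝ) (x : En n) : ℝ≥0∞ :=
  ∫⁻ y, ENNReal.ofReal (g y) * ENNReal.ofReal (‖x - y‖ ^ (-((n : ℝ) - 1)))

/-- The quantity `(∫ g^p dμ)^{1/p}` for an `ℝ≥0∞`-valued function `g`. -/
def lpNorm {α : Type*} [MeasurableSpace α] (p : ℝ) (g : α → ℝ≥0∞) (μ : Measure α) : ℝ≥0∞ :=
  (∫⁻ x, g x ^ p ∂μ) ^ (1 / p)

/-- Average `⨍_Q g` of an `ℝ≥0∞`-valued function over a set `Q`. -/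
def avgE {n : ℕ} (g : En n → ℝ≥0∞) (Q : Set (En n)) : ℝ≥0∞ :=
  (volume Q)⁻¹ * ∫⁻ x in Q, g x

/-- The `A_{p,p*}` constant of a weight `w`; here `ps` plays the role of `p*` and
`pp` that of `p' = p/(p-1)`:
`[w]_{A_{p,p*}} = sup_Q (⨍_Q w^{p*}) (⨍_Q w^{-p'})^{p*/p'}`. -/
def Apq (n : ℕ) (ps pp : ℝ) (w : En n → ℝ) : ℝ≥0∞ :=
  ⨆ (a : En n) (h : ℝ) (_ : 0 < h),
    avgE (fun x => ENNReal.ofReal (w x) ^ ps) (cube a h) *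
      avgE (fun x => ENNReal.ofReal (w x) ^ (-pp)) (cube a h) ^ (ps / pp)

/-- The `A_{1,s}` constant of a weight `w`: the least `c` such that
`⨍_Q w^s ≤ c · essinf_Q w^s` for every cube `Q`. -/
def A1C (n : ℕ) (s : ℝ) (w : En n → ℝ) : ℝ≥0∞ :=
  sInf {c : ℝ≥0∞ | ∀ (a : En n) (h : ℝ), 0 < h →
    avgE (fun x => ENNReal.ofReal (w x) ^ s) (cube a h) ≤
      c * essInf (fun x => ENNReal.ofReal (w x) ^ s) (volume.restrict (cube a h))}

/-- Hardy–Littlewood maximal operator over axis-parallel cubes containing `x`. -/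
def maximal (n : ℕ) (g : En n → ℝ≥0∞) (x : En n) : ℝ≥0∞ :=
  ⨆ (a : En n) (h : ℝ) (_ : 0 < h) (_ : x ∈ cube a h), avgE g (cube a h)

/-- Weak `L^s` quasinorm `sup_{t>0} t · μ{|g|>t}^{1/s}` of a real function. -/
def wnormR {α : Type*} [MeasurableSpace α] (s : ℝ) (g : α → ℝ) (μ : Measure α) : ℝ≥0∞ :=
  ⨆ (t : ℝ) (_ : 0 < t), ENNReal.ofReal t * μ {x | t < |g x|} ^ (1 / s)

/-- The Lorentz `L^{s,1}` norm (w.r.t. Lebesgue measure):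
`‖g‖_{L^{s,1}} = s ∫₀^∞ |{|g| > t}|^{1/s} dt`. -/
def lorentzS1 (n : ℕ) (s : ℝ) (g : En n → ℝ) : ℝ≥0∞ :=
  ENNReal.ofReal s * ∫⁻ t in Set.Ioi (0 : ℝ), volume {x : En n | t < |g x|} ^ (1 / s)

/-- The Lorentz maximal operator
`M_{s,1} f(x) = sup_{Q ∋ x} |Q|^{-1/s} ‖f χ_Q‖_{L^{s,1}}`. -/
def maximalLorentz (n : ℕ) (s : ℝ) (f : En n → ℝ) (x : En n) : ℝ≥0∞ :=
  ⨆ (a : En n) (h : ℝ) (_ : 0 < h) (_ : x ∈ cube a h),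
    (volume (cube a h) ^ (1 / s))⁻¹ * lorentzS1 n s ((cube a h).indicator f)

/-! ### Averaging along rays -/

/-- Along a ray leaving the support, the fundamental theorem of calculus bounds `|f z|`. The
hypothesis `ω ≠ 0` makes `f` compactly supported along the ray. -/
lemma enorm_le_lintegral_ray {n : ℕ} {f : En n → ℝ} (hf : ContDiff ℝ 1 f)
    (hc : HasCompactSupport f) (z ω : En n) (h0 : ω ≠ 0) (h1 : ‖ω‖ ≤ 1) :
    ‖f z‖ₑ ≤ ∫⁻ t in Ioi (0 : ℝ), ‖fderiv ℝ f (z + t • ω)‖ₑ := by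
  have hemb : Topology.IsClosedEmbedding (fun s : ℝ => z + s • (-ω)) :=
    (Homeomorph.addLeft z).isClosedEmbedding.comp (isClosedEmbedding_smul_left (neg_ne_zero.2 h0))
  have key := HasCompactSupport.enorm_le_lintegral_Ici_deriv (f := fun s : ℝ => f (z + s • (-ω)))
    (by fun_prop) (hc.comp_isClosedEmbedding hemb) 0
  have hder : ∀ s : ℝ, ‖deriv (fun s : ℝ => f (z + s • (-ω))) s‖ₑ
      ≤ ‖fderiv ℝ f (z + (-s) • ω)‖ₑ := by
    intro s
    have hl : HasDerivAt (fun s : ℝ => z + s • (-ω)) (-ω) s := by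
      simpa using ((hasDerivAt_id s).smul_const (-ω)).const_add z
    have := ((hf.differentiable one_ne_zero) (z + s • (-ω))).hasFDerivAt.comp_hasDerivAt s hl
    rw [show (fun s : ℝ => f (z + s • (-ω))) = f ∘ (fun s : ℝ => z + s • (-ω)) from rfl,
      this.deriv, neg_smul, ← smul_neg, ← ofReal_norm, ← ofReal_norm]
    apply ENNReal.ofReal_le_ofReal
    refine (ContinuousLinearMap.le_opNorm _ _).trans ?_
    rw [norm_neg]
    exact mul_le_of_le_one_right (norm_nonneg _) h1
  calc ‖f z‖ₑ ≤ ∫⁻ s in Iic (0 : ℝ), ‖deriv (fun s : ℝ => f (z + s • (-ω))) s‖ₑ := by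
        simpa using key
    _ ≤ ∫⁻ s in Iic (0 : ℝ), ‖fderiv ℝ f (z + (-s) • ω)‖ₑ := lintegral_mono hder
    _ = ∫⁻ t in Ici (0 : ℝ), ‖fderiv ℝ f (z + t • ω)‖ₑ := by
        have := (Measure.measurePreserving_neg (volume : Measure ℝ)).setLIntegral_comp_preimage_emb
          (MeasurableEquiv.neg ℝ).measurableEmbedding
          (fun t => ‖fderiv ℝ f (z + t • ω)‖ₑ) (Ici 0)
        simpa using this
    _ = _ := setLIntegral_congr Ioi_ae_eq_Ici.symm

lemma measurable_enorm_fderiv {n : ℕ} {f : En n → ℝ} (hf : ContDiff ℝ 1 f) :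
    Measurable fun y => ‖fderiv ℝ f y‖ₑ :=
  (hf.continuous_fderiv one_ne_zero).enorm.measurable

lemma riesz_fderiv_eq {n : ℕ} (f : En n → ℝ) (x : En n) :
    riesz n (fun y => ‖fderiv ℝ f y‖) x
      = ∫⁻ y, ‖fderiv ℝ f y‖ₑ * ENNReal.ofReal (‖x - y‖ ^ (-((n : ℝ) - 1))) := by
  simp only [riesz, ofReal_norm]

lemma ae_ne_point {n : ℕ} (hn : 2 ≤ n) (x : En n) : ∀ᵐ y : En n, y ≠ x := by
  have : Nonempty (Fin n) := ⟨⟨0, by omega⟩⟩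
  have : Nontrivial (En n) := inferInstance
  exact Measure.ae_ne volume x

/-- On `B(x, R)` the Riesz kernel is at least `R^{-(n-1)}`. At the centre the kernel takes the junk
value `0`, so the comparison holds only almost everywhere. -/
lemma setLIntegral_le_kernel {n : ℕ} (hn : 2 ≤ n) (g : En n → ℝ≥0∞) (x : En n)
    {R : ℝ} (hR : 0 < R) :
    ∫⁻ y in Metric.closedBall x R, g y ≤
      ENNReal.ofReal (R ^ ((n : ℝ) - 1)) *
        ∫⁻ y, g y * ENNReal.ofReal (‖x - y‖ ^ (-((n : ℝ) - 1))) := by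
  have hn' : (0 : ℝ) ≤ (n : ℝ) - 1 := by
    have : (2 : ℝ) ≤ n := by exact_mod_cast hn
    linarith
  rw [← lintegral_const_mul' _ _ ENNReal.ofReal_ne_top,
    ← lintegral_indicator Metric.isClosed_closedBall.measurableSet]
  apply lintegral_mono_ae
  filter_upwards [ae_ne_point hn x] with y hy
  by_cases hyB : y ∈ Metric.closedBall x R
  · rw [indicator_of_mem hyB]
    have hpos : 0 < ‖x - y‖ := norm_pos_iff.2 (sub_ne_zero.2 hy.symm)
    have hle : ‖x - y‖ ≤ R := by
      rw [← dist_eq_norm, dist_comm]; exact hyB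
    have h1 : (1 : ℝ≥0∞) ≤ ENNReal.ofReal (R ^ ((n : ℝ) - 1)) *
        ENNReal.ofReal (‖x - y‖ ^ (-((n : ℝ) - 1))) := by
      rw [← ENNReal.ofReal_mul (by positivity), Real.rpow_neg hpos.le, ← div_eq_mul_inv,
        ENNReal.one_le_ofReal, one_le_div (by positivity)]
      exact Real.rpow_le_rpow hpos.le hle hn'
    calc g y = g y * 1 := (mul_one _).symm
      _ ≤ g y * (ENNReal.ofReal (R ^ ((n : ℝ) - 1)) *
          ENNReal.ofReal (‖x - y‖ ^ (-((n : ℝ) - 1)))) := by gcongr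
      _ = _ := by ring
  · rw [indicator_of_notMem hyB]; exact zero_le

/-- The substitution `w = z + t ω` maps the unit ball onto `B(z, t) ⊆ B(x, 2t)`, with Jacobian
`tⁿ`. -/
lemma lintegral_ball_comp_smul_le {n : ℕ} {G : En n → ℝ≥0∞} (hG : Measurable G)
    {x z : En n} {t : ℝ} (ht : 0 < t) (hz : dist z x ≤ t) :
    ∫⁻ ω in Metric.closedBall (0 : En n) 1, G (z + t • ω) ≤
      ENNReal.ofReal (t ^ (-(n : ℝ))) * ∫⁻ w in Metric.closedBall x (2 * t), G w := by
  set F : En n → ℝ≥0∞ := (Metric.closedBall x (2 * t)).indicator G with hF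
  have hFm : Measurable F := hG.indicator Metric.isClosed_closedBall.measurableSet
  calc ∫⁻ ω in Metric.closedBall (0 : En n) 1, G (z + t • ω)
      ≤ ∫⁻ ω in Metric.closedBall (0 : En n) 1, F (z + t • ω) := by
        apply setLIntegral_mono' Metric.isClosed_closedBall.measurableSet
        intro ω hω
        rw [hF, indicator_of_mem]
        have h1 : ‖ω‖ ≤ 1 := by simpa using hω
        have h2 : dist (z + t • ω) z ≤ t := by
          rw [dist_eq_norm, add_sub_cancel_left, norm_smul, Real.norm_of_nonneg ht.le]
          exact mul_le_of_le_one_right ht.le h1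
        have := dist_triangle (z + t • ω) z x
        rw [Metric.mem_closedBall]; linarith
    _ ≤ ∫⁻ ω, F (z + t • ω) := setLIntegral_le_lintegral _ _
    _ = ∫⁻ v, F (z + v) ∂(Measure.map (t • ·) volume) := by
        rw [lintegral_map (by fun_prop) (by fun_prop)]
    _ = ENNReal.ofReal (t ^ (-(n : ℝ))) * ∫⁻ v, F (z + v) := by
        rw [Measure.map_addHaar_smul _ ht.ne', lintegral_smul_measure, smul_eq_mul]
        congr 2
        rw [finrank_euclideanSpace_fin, abs_of_nonneg (by positivity), Real.rpow_neg ht.le,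
          Real.rpow_natCast]
    _ = ENNReal.ofReal (t ^ (-(n : ℝ))) * ∫⁻ v, F v := by
        rw [lintegral_add_left_eq_self]
    _ = _ := by rw [hF, lintegral_indicator Metric.isClosed_closedBall.measurableSet]

lemma lintegral_translate_ball_le {n : ℕ} {G : En n → ℝ≥0∞}
    {x ω : En n} {t R : ℝ} (ht : 0 ≤ t) (htR : t ≤ R) (hω : ‖ω‖ ≤ 1) :
    ∫⁻ z in Metric.closedBall x R, G (z + t • ω) ≤
      ∫⁻ w in Metric.closedBall x (2 * R), G w := by
  set F : En n → ℝ≥0∞ := (Metric.closedBall x (2 * R)).indicator G with hF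
  calc ∫⁻ z in Metric.closedBall x R, G (z + t • ω)
      ≤ ∫⁻ z in Metric.closedBall x R, F (z + t • ω) := by
        apply setLIntegral_mono' Metric.isClosed_closedBall.measurableSet
        intro z hz
        rw [hF, indicator_of_mem]
        have h2 : dist (z + t • ω) z ≤ t := by
          rw [dist_eq_norm, add_sub_cancel_left, norm_smul, Real.norm_of_nonneg ht]
          exact mul_le_of_le_one_right ht hω
        have := dist_triangle (z + t • ω) z x
        rw [Metric.mem_closedBall] at *; linarith
    _ ≤ ∫⁻ z, F (z + t • ω) := setLIntegral_le_lintegral _ _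
    _ = ∫⁻ z, F z := by rw [lintegral_add_right_eq_self]
    _ = _ := by rw [hF, lintegral_indicator Metric.isClosed_closedBall.measurableSet]

lemma lintegral_tail_rpow {n : ℕ} (hn : 2 ≤ n) {r : ℝ} (hr : 0 < r) :
    ∫⁻ t in Ici (r / 2), ENNReal.ofReal (t ^ (-(n : ℝ))) ≤
      ENNReal.ofReal (2 ^ n) * ENNReal.ofReal (r ^ (-((n : ℝ) - 1))) := by
  have hn' : (2 : ℝ) ≤ n := by exact_mod_cast hn
  have hr2 : 0 < r / 2 := by positivity
  rw [setLIntegral_congr Ioi_ae_eq_Ici.symm,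
    ← ofReal_integral_eq_lintegral_ofReal (integrableOn_Ioi_rpow_of_lt (by linarith) hr2)
      ((ae_restrict_mem measurableSet_Ioi).mono fun t ht =>
        Real.rpow_nonneg (hr2.trans ht).le _),
    integral_Ioi_rpow_of_lt (by linarith) hr2, ← ENNReal.ofReal_mul (by positivity)]
  apply ENNReal.ofReal_le_ofReal
  rw [show -(n : ℝ) + 1 = -((n : ℝ) - 1) by ring, neg_div_neg_eq]
  refine (div_le_self (by positivity) (by linarith)).trans ?_
  rw [Real.div_rpow hr.le (by norm_num), div_eq_mul_inv, mul_comm, Real.rpow_neg (by norm_num),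
    inv_inv, ← Real.rpow_natCast]
  gcongr
  · norm_num
  · linarith

/-- Exchanging the integrals, each `w ≠ x` contributes `∫_{t ≥ |x-w|/2} t^{-n} dt`, a multiple of the
Riesz kernel at most. -/
lemma lintegral_tail_ball_le {n : ℕ} (hn : 2 ≤ n) {G : En n → ℝ≥0∞} (hG : Measurable G)
    (x : En n) :
    ∫⁻ t in Ioi (0 : ℝ), ENNReal.ofReal (t ^ (-(n : ℝ))) *
        ∫⁻ w in Metric.closedBall x (2 * t), G w ≤
      ENNReal.ofReal (2 ^ n) *
        ∫⁻ y, G y * ENNReal.ofReal (‖x - y‖ ^ (-((n : ℝ) - 1))) := by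
  have hS : MeasurableSet {p : ℝ × En n | dist p.2 x ≤ 2 * p.1} :=
    (isClosed_le (by fun_prop) (by fun_prop)).measurableSet
  set H : ℝ × En n → ℝ≥0∞ := {p : ℝ × En n | dist p.2 x ≤ 2 * p.1}.indicator
      (fun p => ENNReal.ofReal (p.1 ^ (-(n : ℝ))) * G p.2) with hH
  have hm : Measurable H := by
    apply Measurable.indicator _ hS
    exact (by fun_prop : Measurable fun p : ℝ × En n => ENNReal.ofReal (p.1 ^ (-(n : ℝ)))).mul
      (hG.comp measurable_snd)
  calc _ = ∫⁻ t in Ioi (0 : ℝ), ∫⁻ w, H (t, w) := by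
        refine lintegral_congr fun t => ?_
        rw [← lintegral_const_mul' _ _ ENNReal.ofReal_ne_top,
          ← lintegral_indicator Metric.isClosed_closedBall.measurableSet]
        rfl
    _ = ∫⁻ w, ∫⁻ t in Ioi (0 : ℝ), H (t, w) :=
        lintegral_lintegral_swap hm.aemeasurable
    _ ≤ ∫⁻ y, ENNReal.ofReal (2 ^ n) *
        (G y * ENNReal.ofReal (‖x - y‖ ^ (-((n : ℝ) - 1)))) := by
        apply lintegral_mono_ae
        filter_upwards [ae_ne_point hn x] with y hy
        have hpos : 0 < ‖x - y‖ := norm_pos_iff.2 (sub_ne_zero.2 hy.symm)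
        calc _ ≤ ∫⁻ t, H (t, y) :=
              setLIntegral_le_lintegral _ _
          _ = ∫⁻ t in Ici (‖x - y‖ / 2), ENNReal.ofReal (t ^ (-(n : ℝ))) * G y := by
              rw [← lintegral_indicator measurableSet_Ici]
              refine lintegral_congr fun t => ?_
              have : (dist y x ≤ 2 * t) ↔ ‖x - y‖ / 2 ≤ t := by
                rw [dist_comm, dist_eq_norm]; constructor <;> intro h <;> linarith
              simp only [hH, indicator, mem_ofPred_eq, mem_Ici, this]
          _ = (∫⁻ t in Ici (‖x - y‖ / 2), ENNReal.ofReal (t ^ (-(n : ℝ)))) * G y := by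
              rw [lintegral_mul_const _ (by fun_prop)]
          _ ≤ (ENNReal.ofReal (2 ^ n) * ENNReal.ofReal (‖x - y‖ ^ (-((n : ℝ) - 1)))) * G y := by
              gcongr; exact lintegral_tail_rpow hn hpos
          _ = _ := by ring
    _ = _ := lintegral_const_mul' _ _ ENNReal.ofReal_ne_top

/-- The integral of `|f|` over a ball is controlled by `Rⁿ` times the Riesz potential of `|∇f|` at
the centre. -/
lemma lintegral_ball_enorm_le {n : ℕ} (hn : 2 ≤ n) {f : En n → ℝ} (hf : ContDiff ℝ 1 f)
    (hc : HasCompactSupport f) (x : En n) {R : ℝ} (hR : 0 < R) :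
    ∫⁻ z in Metric.closedBall x R, ‖f z‖ₑ ≤
      ENNReal.ofReal (2 ^ (n + 1) * R ^ n) * riesz n (fun y => ‖fderiv ℝ f y‖) x := by
  rw [riesz_fderiv_eq]
  set G : En n → ℝ≥0∞ := fun y => ‖fderiv ℝ f y‖ₑ with hGdef
  have hG : Measurable G := measurable_enorm_fderiv hf
  have hGt : Continuous fun y => fderiv ℝ f y := hf.continuous_fderiv one_ne_zero
  set I : ℝ≥0∞ := ∫⁻ y, G y * ENNReal.ofReal (‖x - y‖ ^ (-((n : ℝ) - 1))) with hI
  set B : Set (En n) := Metric.closedBall 0 1 with hB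
  set D : Set (En n) := Metric.closedBall x R with hD
  have hBm : MeasurableSet B := Metric.isClosed_closedBall.measurableSet
  have hDm : MeasurableSet D := Metric.isClosed_closedBall.measurableSet
  have hB0 : volume B ≠ 0 := (Metric.measure_closedBall_pos volume 0 one_pos).ne'
  have hBt : volume B ≠ ∞ := (isCompact_closedBall 0 1).measure_lt_top.ne
  have hDB : volume D = ENNReal.ofReal (R ^ n) * volume B := by
    rw [hD, hB, Measure.addHaar_closedBall_center volume x,
      Measure.addHaar_closedBall' volume 0 hR.le,
      finrank_euclideanSpace_fin]
  have hn' : (2 : ℝ) ≤ n := by exact_mod_cast hn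
  -- average the ray estimate over all directions and all base points
  have h1 : volume B * ∫⁻ z in D, ‖f z‖ₑ ≤
      ∫⁻ ω in B, ∫⁻ z in D, ∫⁻ t in Ioi (0 : ℝ), G (z + t • ω) := by
    rw [mul_comm, ← setLIntegral_const]
    apply lintegral_mono_ae
    filter_upwards [ae_restrict_mem hBm, ae_restrict_of_ae (ae_ne_point hn (0 : En n))] with ω h h'
    exact lintegral_mono fun z => enorm_le_lintegral_ray hf hc z ω h' (by simpa [hB] using h)
  have hsplit : ∀ z ω : En n, ∫⁻ t in Ioi (0 : ℝ), G (z + t • ω) =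
      (∫⁻ t in Ioc 0 R, G (z + t • ω)) + ∫⁻ t in Ioi R, G (z + t • ω) := by
    intro z ω
    rw [← lintegral_union measurableSet_Ioi (Set.Ioc_disjoint_Ioi le_rfl),
      Ioc_union_Ioi_eq_Ioi hR.le]
  have hmz : ∀ (J : Set ℝ) (ω : En n), Measurable fun z => ∫⁻ t in J, G (z + t • ω) := by
    intro J ω
    apply Measurable.lintegral_prod_right' (f := fun p : En n × ℝ => G (p.1 + p.2 • ω))
    fun_prop
  have hmω : ∀ (J : Set ℝ), Measurable fun ω => ∫⁻ z in D, ∫⁻ t in J, G (z + t • ω) := by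
    intro J
    apply Measurable.lintegral_prod_right'
      (f := fun p : En n × En n => ∫⁻ t in J, G (p.2 + t • p.1))
    apply Measurable.lintegral_prod_right'
      (f := fun p : (En n × En n) × ℝ => G (p.1.2 + p.2 • p.1.1))
    fun_prop
  have h2 : ∫⁻ ω in B, ∫⁻ z in D, ∫⁻ t in Ioi (0 : ℝ), G (z + t • ω) =
      (∫⁻ ω in B, ∫⁻ z in D, ∫⁻ t in Ioc 0 R, G (z + t • ω)) +
        ∫⁻ ω in B, ∫⁻ z in D, ∫⁻ t in Ioi R, G (z + t • ω) := by
    rw [← lintegral_add_left (hmω _)]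
    refine lintegral_congr fun ω => ?_
    rw [← lintegral_add_left (hmz _ _)]
    exact lintegral_congr fun z => hsplit z ω
  -- short times: integrate in the base point first
  have h3 : ∫⁻ ω in B, ∫⁻ z in D, ∫⁻ t in Ioc 0 R, G (z + t • ω) ≤
      volume B * (ENNReal.ofReal (2 ^ n * R ^ n) * I) := by
    calc _ ≤ ∫⁻ ω in B, ENNReal.ofReal (2 ^ n * R ^ n) * I := by
          apply setLIntegral_mono' hBm
          intro ω hω
          rw [lintegral_lintegral_swap (by
            refine Measurable.aemeasurable ?_
            change Measurable fun p : En n × ℝ => G (p.1 + p.2 • ω)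
            fun_prop)]
          calc _ ≤ ∫⁻ t in Ioc 0 R, ∫⁻ w in Metric.closedBall x (2 * R), G w := by
                apply setLIntegral_mono' measurableSet_Ioc
                intro t ht
                exact lintegral_translate_ball_le ht.1.le ht.2 (by simpa [hB] using hω)
            _ = ENNReal.ofReal R * ∫⁻ w in Metric.closedBall x (2 * R), G w := by
                rw [setLIntegral_const, Real.volume_Ioc, sub_zero, mul_comm]
            _ ≤ ENNReal.ofReal R * (ENNReal.ofReal ((2 * R) ^ ((n : ℝ) - 1)) * I) := by
                gcongr
                exact setLIntegral_le_kernel hn G x (by positivity)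
            _ ≤ _ := by
                rw [← mul_assoc, ← ENNReal.ofReal_mul hR.le]
                refine mul_le_mul_left (ENNReal.ofReal_le_ofReal ?_) I
                calc R * (2 * R) ^ ((n : ℝ) - 1) ≤ (2 * R) * (2 * R) ^ ((n : ℝ) - 1) := by
                      gcongr; linarith
                  _ = (2 * R) ^ n := by
                      rw [← Real.rpow_one_add' (by positivity) (by linarith)]
                      rw [add_sub_cancel, Real.rpow_natCast]
                  _ = _ := mul_pow _ _ _
      _ = _ := by rw [setLIntegral_const, mul_comm]
  -- long times: integrate in the direction first
  have h4 : ∫⁻ ω in B, ∫⁻ z in D, ∫⁻ t in Ioi R, G (z + t • ω) ≤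
      volume B * (ENNReal.ofReal (2 ^ n * R ^ n) * I) := by
    rw [lintegral_lintegral_swap (by
      refine Measurable.aemeasurable ?_
      apply Measurable.lintegral_prod_right'
        (f := fun p : (En n × En n) × ℝ => G (p.1.2 + p.2 • p.1.1))
      fun_prop)]
    calc _ ≤ ∫⁻ z in D, ENNReal.ofReal (2 ^ n) * I := by
          apply setLIntegral_mono' hDm
          intro z hz
          rw [lintegral_lintegral_swap (by
            refine Measurable.aemeasurable ?_
            change Measurable fun p : En n × ℝ => G (z + p.2 • p.1)
            fun_prop)]
          calc _ ≤ ∫⁻ t in Ioi R, ENNReal.ofReal (t ^ (-(n : ℝ))) *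
                  ∫⁻ w in Metric.closedBall x (2 * t), G w := by
                apply setLIntegral_mono' measurableSet_Ioi
                intro t ht
                exact lintegral_ball_comp_smul_le hG (hR.trans ht)
                  ((Metric.mem_closedBall.1 hz).trans (le_of_lt ht))
            _ ≤ ∫⁻ t in Ioi 0, ENNReal.ofReal (t ^ (-(n : ℝ))) *
                  ∫⁻ w in Metric.closedBall x (2 * t), G w :=
                lintegral_mono_set (Ioi_subset_Ioi hR.le)
            _ ≤ _ := lintegral_tail_ball_le hn hG x
      _ = _ := by
          rw [setLIntegral_const, hDB, ENNReal.ofReal_mul (by positivity)]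
          ring
  have h5 : volume B * ∫⁻ z in D, ‖f z‖ₑ ≤
      volume B * (ENNReal.ofReal (2 ^ (n + 1) * R ^ n) * I) := by
    refine h1.trans ((h2.trans_le (add_le_add h3 h4)).trans_eq ?_)
    rw [show (2 : ℝ) ^ (n + 1) * R ^ n = 2 ^ n * R ^ n + 2 ^ n * R ^ n by ring,
      ENNReal.ofReal_add (by positivity) (by positivity)]
    ring
  exact (ENNReal.mul_le_mul_iff_right hB0 hBt).1 h5

/-! ### Truncation and the Lorentz–Sobolev inequality -/

/-- A smooth truncation profile: it vanishes on `[-1, 1]` and equals `1` where `|s| ≥ 2`. -/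
def trunc (s : ℝ) : ℝ := Real.smoothTransition (s ^ 2 - 1)

lemma trunc_contDiff : ContDiff ℝ 1 trunc :=
  (Real.smoothTransition.contDiff (n := 1)).comp (by fun_prop : ContDiff ℝ 1 fun s : ℝ => s ^ 2 - 1)

lemma trunc_zero {s : ℝ} (h : |s| ≤ 1) : trunc s = 0 :=
  Real.smoothTransition.zero_of_nonpos (by nlinarith [sq_abs s, abs_nonneg s])

lemma trunc_one {s : ℝ} (h : 2 ≤ |s|) : trunc s = 1 :=
  Real.smoothTransition.one_of_one_le (by nlinarith [sq_abs s, abs_nonneg s])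

lemma deriv_trunc_low {s : ℝ} (h : |s| < 1) : deriv trunc s = 0 := by
  have : trunc =ᶠ[nhds s] fun _ => (0 : ℝ) := by
    filter_upwards [(isOpen_lt continuous_abs continuous_const).mem_nhds h] with y hy
    exact trunc_zero (le_of_lt hy)
  rw [this.deriv_eq, deriv_const]

lemma deriv_trunc_high {s : ℝ} (h : 2 < |s|) : deriv trunc s = 0 := by
  have : trunc =ᶠ[nhds s] fun _ => (1 : ℝ) := by
    filter_upwards [(isOpen_lt continuous_const continuous_abs).mem_nhds h] with y hy
    exact trunc_one (le_of_lt hy)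
  rw [this.deriv_eq, deriv_const]

lemma exists_deriv_trunc_bound : ∃ C : ℝ, 0 ≤ C ∧ ∀ s, |deriv trunc s| ≤ C := by
  have hcont : Continuous (deriv trunc) := trunc_contDiff.continuous_deriv le_rfl
  obtain ⟨C, hC⟩ := (isCompact_Icc (a := (-2 : ℝ)) (b := 2)).exists_bound_of_continuousOn
    hcont.continuousOn
  refine ⟨max C 0, le_max_right _ _, fun s => ?_⟩
  by_cases h : 2 < |s|
  · simp [deriv_trunc_high h]
  · exact (hC s (abs_le.1 (not_lt.1 h))).trans (le_max_left _ _)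

/-- The scale-invariant bound `∫_r^{2r} 2/t dt ≤ 2`, which sums the truncation estimates over all
levels. For `r ≤ 0` the window misses `(0, ∞)`. -/
lemma lintegral_inv_window (r : ℝ) :
    ∫⁻ t in Ioi (0 : ℝ), (Icc r (2 * r)).indicator (fun t => ENNReal.ofReal (2 / t)) t ≤ 2 := by
  rcases le_or_gt r 0 with hr | hr
  · rw [setLIntegral_congr_fun (g := fun _ => 0) measurableSet_Ioi]
    · simp
    · intro t ht
      apply indicator_of_notMem
      intro h
      have := h.2
      simp only [mem_Ioi] at ht
      linarith
  · calc _ ≤ ∫⁻ t, (Icc r (2 * r)).indicator (fun t => ENNReal.ofReal (2 / t)) t :=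
          setLIntegral_le_lintegral _ _
      _ = ∫⁻ t in Icc r (2 * r), ENNReal.ofReal (2 / t) := lintegral_indicator measurableSet_Icc _
      _ ≤ ∫⁻ t in Icc r (2 * r), ENNReal.ofReal (2 / r) := by
          apply setLIntegral_mono' measurableSet_Icc
          intro t ht
          apply ENNReal.ofReal_le_ofReal
          exact div_le_div_of_nonneg_left (by norm_num) hr ht.1
      _ = 2 := by
          rw [setLIntegral_const, Real.volume_Icc, ← ENNReal.ofReal_mul (by positivity)]
          rw [show 2 / r * (2 * r - r) = 2 by field_simp; ring]
          simp

/-- The endpoint Sobolev inequality `W^{1,1} ⊆ L^{n',1}`, obtained from the embedding into `L^{n'}`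
by truncation at every level `t`. -/
lemma exists_lorentz_sobolev (n : ℕ) (hn : 2 ≤ n) :
    ∃ C : ℝ, 0 ≤ C ∧ ∀ u : En n → ℝ, ContDiff ℝ 1 u → HasCompactSupport u →
      ∫⁻ t in Ioi (0 : ℝ), volume {x : En n | t < |u x|} ^ (1 / ((n : ℝ) / (n - 1))) ≤
        ENNReal.ofReal C * ∫⁻ y, ‖fderiv ℝ u y‖ₑ := by
  obtain ⟨K, hK0, hK⟩ := exists_deriv_trunc_bound
  have hn' : (2 : ℝ) ≤ n := by exact_mod_cast hn
  set p : NNReal := NNReal.conjExponent n with hp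
  have hpc : NNReal.HolderConjugate (Module.finrank ℝ (En n)) p := by
    rw [finrank_euclideanSpace_fin]
    exact NNReal.HolderConjugate.conjExponent (by exact_mod_cast (by omega : 1 < n))
  have hpr : (p : ℝ) = (n : ℝ) / (n - 1) := by
    have := hpc.coe.conjugate_eq
    rw [finrank_euclideanSpace_fin] at this
    simpa using this
  have hp0 : p ≠ 0 := hpc.symm.pos.ne'
  set A : NNReal := eLpNormLESNormFDerivOneConst (volume : Measure (En n)) p with hA
  refine ⟨A * K * 2, by positivity, fun u hu hcu => ?_⟩
  set G : En n → ℝ≥0∞ := fun y => ‖fderiv ℝ u y‖ₑ with hGdef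
  have hG : Measurable G := measurable_enorm_fderiv hu
  set S : Set (ℝ × En n) := {q | |u q.2| ≤ q.1 ∧ q.1 ≤ 2 * |u q.2|} with hS
  have hSm : MeasurableSet S := by
    have hc : Continuous fun q : ℝ × En n => |u q.2| :=
      (hu.continuous.comp continuous_snd).abs
    exact ((isClosed_le hc continuous_fst).inter
      (isClosed_le continuous_fst (continuous_const.mul hc))).measurableSet
  set H : ℝ × En n → ℝ≥0∞ := S.indicator fun q => ENNReal.ofReal (2 / q.1) * G q.2 with hH
  have hHm : Measurable H := by
    apply Measurable.indicator _ hSm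
    exact (by fun_prop : Measurable fun q : ℝ × En n => ENNReal.ofReal (2 / q.1)).mul
      (hG.comp measurable_snd)
  -- `{|u| > t}` lies in `{v = 1}`, and `∇v` lives on `{t/2 ≤ |u| ≤ t}`
  have hlev : ∀ t : ℝ, 0 < t →
      volume {x : En n | t < |u x|} ^ (1 / ((n : ℝ) / (n - 1))) ≤
        ENNReal.ofReal (A * K) * ∫⁻ y, H (t, y) := by
    intro t ht
    set v : En n → ℝ := fun y => trunc (2 / t * u y) with hv
    have hvd : ContDiff ℝ 1 v := trunc_contDiff.comp (contDiff_const.mul hu)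
    have hvc : HasCompactSupport v := by
      refine hcu.comp_left (g := fun s => trunc (2 / t * s)) ?_
      exact trunc_zero (by simp)
    have hmono : volume {x : En n | t < |u x|} ^ (1 / ((n : ℝ) / (n - 1))) ≤ eLpNorm v p volume := by
      have hm : MeasurableSet {x : En n | t < |u x|} :=
        (isOpen_lt continuous_const hu.continuous.abs).measurableSet
      have h1 : eLpNorm ({x : En n | t < |u x|}.indicator fun _ => (1 : ℝ)) p volume =
          volume {x : En n | t < |u x|} ^ (1 / ((n : ℝ) / (n - 1))) := by
        rw [eLpNorm_indicator_const hm (by simpa using hp0) (by simp)]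
        simp [hpr]
      rw [← h1]
      apply eLpNorm_mono
      intro y
      by_cases hy : t < |u y|
      · rw [indicator_of_mem (by exact hy), hv]
        simp only
        rw [trunc_one]
        rw [abs_mul, abs_of_pos (by positivity), div_mul_eq_mul_div, le_div_iff₀ ht]
        linarith
      · rw [indicator_of_notMem (by exact hy)]; simp
    have hder : ∀ y, ‖fderiv ℝ v y‖ₑ ≤ ENNReal.ofReal K * H (t, y) := by
      intro y
      have hd : HasFDerivAt v (deriv trunc (2 / t * u y) • ((2 / t) • fderiv ℝ u y)) y := by
        have h1 : HasFDerivAt (fun y => 2 / t * u y) ((2 / t) • fderiv ℝ u y) y :=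
          ((hu.differentiable one_ne_zero) y).hasFDerivAt.const_mul _
        exact ((trunc_contDiff.differentiable one_ne_zero) _).hasDerivAt.comp_hasFDerivAt y h1
      rw [hd.fderiv]
      by_cases hy : (t, y) ∈ S
      · rw [hH, indicator_of_mem hy, enorm_smul, enorm_smul]
        simp only
        gcongr
        · rw [← ofReal_norm]; exact ENNReal.ofReal_le_ofReal (hK _)
        · rw [Real.enorm_of_nonneg (by positivity)]
      · have h0 : deriv trunc (2 / t * u y) = 0 := by
          have habs : |2 / t * u y| = 2 * |u y| / t := by
            rw [abs_mul, abs_of_pos (by positivity : 0 < 2 / t)]; ring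
          rcases not_and_or.1 (show ¬ (|u y| ≤ t ∧ t ≤ 2 * |u y|) from hy) with h | h
          · apply deriv_trunc_high
            rw [habs, lt_div_iff₀ ht]; linarith
          · apply deriv_trunc_low
            rw [habs, div_lt_one ht]; linarith
        rw [h0, zero_smul, ← ofReal_norm, norm_zero, ENNReal.ofReal_zero]
        exact zero_le
    calc _ ≤ eLpNorm v p volume := hmono
      _ ≤ A * eLpNorm (fderiv ℝ v) 1 volume := eLpNorm_le_eLpNorm_fderiv_one _ hvd hvc hpc
      _ = A * ∫⁻ y, ‖fderiv ℝ v y‖ₑ := by rw [eLpNorm_one_eq_lintegral_enorm]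
      _ ≤ A * ∫⁻ y, ENNReal.ofReal K * H (t, y) := by gcongr with y; exact hder y
      _ = _ := by
          rw [lintegral_const_mul' _ _ ENNReal.ofReal_ne_top, ← mul_assoc,
            ENNReal.ofReal_mul (by positivity), ENNReal.ofReal_coe_nnreal]
  calc _ ≤ ∫⁻ t in Ioi (0 : ℝ), ENNReal.ofReal (A * K) * ∫⁻ y, H (t, y) :=
        setLIntegral_mono' measurableSet_Ioi hlev
    _ = ENNReal.ofReal (A * K) * ∫⁻ t in Ioi (0 : ℝ), ∫⁻ y, H (t, y) :=
        lintegral_const_mul' _ _ ENNReal.ofReal_ne_top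
    _ = ENNReal.ofReal (A * K) * ∫⁻ y, ∫⁻ t in Ioi (0 : ℝ), H (t, y) := by
        rw [lintegral_lintegral_swap (f := fun t y => H (t, y)) hHm.aemeasurable]
    _ ≤ ENNReal.ofReal (A * K) * ∫⁻ y, 2 * G y := by
        gcongr with y
        calc _ = ∫⁻ t in Ioi (0 : ℝ),
              (Icc |u y| (2 * |u y|)).indicator (fun t => ENNReal.ofReal (2 / t)) t * G y := by
              refine lintegral_congr fun t => ?_
              simp only [hH, hS, indicator, mem_ofPred_eq, mem_Icc, ite_mul, zero_mul]
          _ = (∫⁻ t in Ioi (0 : ℝ),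
              (Icc |u y| (2 * |u y|)).indicator (fun t => ENNReal.ofReal (2 / t)) t) * G y := by
              rw [lintegral_mul_const]
              exact Measurable.indicator (by fun_prop) measurableSet_Icc
          _ ≤ _ := by gcongr; exact lintegral_inv_window _
    _ = _ := by
        rw [lintegral_const_mul' _ _ (by simp), ← mul_assoc, ENNReal.ofReal_mul (p := A * K) (by positivity)]
        simp

/-! ### Localization to a cube -/

/-- Rescaled cutoffs between `B(x, R)` and `B(x, 2R)`, with a gradient bound `L / R` where `L`
depends only on the dimension. -/
lemma exists_cutoff (n : ℕ) :
    ∃ L : ℝ, 0 ≤ L ∧ ∀ (x : En n) (R : ℝ), 0 < R → ∃ η : En n → ℝ, ContDiff ℝ 1 η ∧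
      (∀ y, 0 ≤ η y ∧ η y ≤ 1) ∧ (∀ y ∈ Metric.closedBall x R, η y = 1) ∧
      (∀ y ∉ Metric.closedBall x (2 * R), η y = 0) ∧ ∀ y, ‖fderiv ℝ η y‖ ≤ L / R := by
  let χ : ContDiffBump (0 : En n) := ⟨1, 2, one_pos, one_lt_two⟩
  have hχ : ContDiff ℝ 1 χ := χ.contDiff
  obtain ⟨L, hL⟩ := (χ.hasCompactSupport.fderiv ℝ).exists_bound_of_continuous
    (hχ.continuous_fderiv one_ne_zero)
  refine ⟨L, (norm_nonneg _).trans (hL 0), fun x R hR => ?_⟩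
  have hnorm : ∀ y, ‖R⁻¹ • (y - x)‖ = dist y x / R := by
    intro y
    rw [norm_smul, norm_inv, Real.norm_of_nonneg hR.le, dist_eq_norm]
    ring
  refine ⟨fun y => χ (R⁻¹ • (y - x)), hχ.comp (by fun_prop), fun y => ⟨χ.nonneg, χ.le_one⟩,
    fun y hy => ?_, fun y hy => ?_, fun y => ?_⟩
  · apply χ.one_of_mem_closedBall
    rw [mem_closedBall_zero_iff, hnorm, div_le_iff₀ hR]
    simpa [χ] using hy
  · apply χ.zero_of_le_dist
    rw [dist_zero_right, hnorm, le_div_iff₀ hR]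
    simpa [χ] using (not_le.1 hy).le
  · have h1 : HasFDerivAt (fun y : En n => R⁻¹ • (y - x))
        (R⁻¹ • ContinuousLinearMap.id ℝ (En n)) y :=
      ((hasFDerivAt_id y).sub_const x).const_smul R⁻¹
    have h2 : HasFDerivAt (fun y => χ (R⁻¹ • (y - x)))
        ((fderiv ℝ χ (R⁻¹ • (y - x))).comp (R⁻¹ • ContinuousLinearMap.id ℝ (En n))) y :=
      ((hχ.differentiable one_ne_zero) _).hasFDerivAt.comp y h1
    rw [h2.fderiv, ContinuousLinearMap.comp_smul, ContinuousLinearMap.comp_id, norm_smul,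
      norm_inv, Real.norm_of_nonneg hR.le, div_eq_inv_mul]
    gcongr
    exact hL _

lemma volume_cube {n : ℕ} (a : En n) {h : ℝ} (hh : 0 < h) :
    volume (cube a h) = ENNReal.ofReal (h ^ n) := by
  have hpre : cube a h = (WithLp.ofLp : En n → Fin n → ℝ) ⁻¹'
      Icc (fun i => a i) (fun i => a i + h) := by
    ext y
    simp [cube, Pi.le_def, forall_and]
  rw [hpre, (PiLp.volume_preserving_ofLp (Fin n)).measure_preimage
    measurableSet_Icc.nullMeasurableSet, Real.volume_Icc_pi]
  simp [ENNReal.ofReal_pow hh.le]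

lemma cube_subset_closedBall {n : ℕ} (a x : En n) {h : ℝ} (hh : 0 < h) (hx : x ∈ cube a h) :
    cube a h ⊆ Metric.closedBall x (n * h) := by
  intro y hy
  have h1 : ∀ i, ‖(y - x) i‖ ≤ h := by
    intro i
    rw [PiLp.sub_apply, Real.norm_eq_abs, abs_le]
    constructor <;> linarith [(hx i).1, (hx i).2, (hy i).1, (hy i).2]
  rw [Metric.mem_closedBall, dist_eq_norm, EuclideanSpace.norm_eq]
  apply Real.sqrt_le_iff.2 ⟨by positivity, ?_⟩
  calc ∑ i, ‖(y - x) i‖ ^ 2 ≤ ∑ _i : Fin n, h ^ 2 := by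
        gcongr with i; exact h1 i
    _ = n * h ^ 2 := by simp
    _ ≤ (n : ℝ) ^ 2 * h ^ 2 := by
        gcongr
        exact_mod_cast Nat.le_self_pow two_ne_zero n
    _ = _ := by ring

/-- The Lorentz–Sobolev inequality applied to `η f`; the term `f ∇η` of the product rule is absorbed
by `lintegral_ball_enorm_le`. -/
lemma exists_local_lorentz_bound (n : ℕ) (hn : 2 ≤ n) :
    ∃ C : ℝ, 0 ≤ C ∧ ∀ f : En n → ℝ, ContDiff ℝ 1 f → HasCompactSupport f →
      ∀ (x : En n) (R : ℝ), 0 < R → ∀ Q ⊆ Metric.closedBall x R,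
        lorentzS1 n ((n : ℝ) / (n - 1)) (Q.indicator f) ≤
          ENNReal.ofReal (C * R ^ ((n : ℝ) - 1)) * riesz n (fun y => ‖fderiv ℝ f y‖) x := by
  obtain ⟨C, hC0, hC⟩ := exists_lorentz_sobolev n hn
  obtain ⟨L, hL0, hL⟩ := exists_cutoff n
  have hn' : (2 : ℝ) ≤ n := by exact_mod_cast hn
  have hs0 : (0 : ℝ) ≤ (n : ℝ) / (n - 1) := div_nonneg (by linarith) (by linarith)
  refine ⟨(n : ℝ) / (n - 1) * C * (2 ^ ((n : ℝ) - 1) + L * (2 ^ (n + 1) * 2 ^ n)),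
    by positivity, fun f hf hcf x R hR Q hQ => ?_⟩
  obtain ⟨η, hη, hη01, hη1, hη0, hηd⟩ := hL x R hR
  set I := riesz n (fun y => ‖fderiv ℝ f y‖) x with hI
  set D := Metric.closedBall x (2 * R) with hD
  have hDm : MeasurableSet D := Metric.isClosed_closedBall.measurableSet
  have hder : ∀ y, ‖fderiv ℝ (fun y => η y * f y) y‖ₑ ≤
      D.indicator (fun y => ‖fderiv ℝ f y‖ₑ + ENNReal.ofReal (L / R) * ‖f y‖ₑ) y := by
    intro y
    by_cases hy : y ∈ D
    · rw [indicator_of_mem hy, fderiv_fun_mul ((hη.differentiable one_ne_zero) y)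
        ((hf.differentiable one_ne_zero) y)]
      rw [← ofReal_norm, ← ofReal_norm, ← ofReal_norm, ← ENNReal.ofReal_mul (by positivity),
        ← ENNReal.ofReal_add (norm_nonneg _) (by positivity)]
      apply ENNReal.ofReal_le_ofReal
      refine (norm_add_le _ _).trans (add_le_add ?_ ?_)
      · rw [norm_smul, Real.norm_of_nonneg (hη01 y).1]
        exact mul_le_of_le_one_left (norm_nonneg _) (hη01 y).2
      · rw [norm_smul, mul_comm]
        gcongr
        exact hηd y
    · have : (fun y => η y * f y) =ᶠ[nhds y] fun _ => (0 : ℝ) := by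
        filter_upwards [Metric.isClosed_closedBall.isOpen_compl.mem_nhds hy] with w hw
        rw [hη0 w hw, zero_mul]
      rw [this.fderiv_eq, fderiv_fun_const, Pi.zero_apply, ← ofReal_norm, norm_zero,
        ENNReal.ofReal_zero]
      exact zero_le
  have hmono : ∀ t, volume {y : En n | t < |Q.indicator f y|} ^ (1 / ((n : ℝ) / (n - 1))) ≤
      volume {y : En n | t < |η y * f y|} ^ (1 / ((n : ℝ) / (n - 1))) := by
    intro t
    apply ENNReal.rpow_le_rpow _ (by positivity)
    apply measure_mono
    intro y hy
    refine lt_of_lt_of_le (show t < |Q.indicator f y| from hy) ?_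
    by_cases hyQ : y ∈ Q
    · rw [indicator_of_mem hyQ, hη1 y (hQ hyQ), one_mul]
    · rw [indicator_of_notMem hyQ, abs_zero]; exact abs_nonneg _
  have hint : ∫⁻ y, ‖fderiv ℝ (fun y => η y * f y) y‖ₑ ≤
      ENNReal.ofReal ((2 ^ ((n : ℝ) - 1) + L * (2 ^ (n + 1) * 2 ^ n)) * R ^ ((n : ℝ) - 1)) * I := by
    have hRn : R ^ n = R * R ^ ((n : ℝ) - 1) := by
      rw [← Real.rpow_one_add' hR.le (by linarith), add_sub_cancel, Real.rpow_natCast]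
    calc _ ≤ ∫⁻ y in D, (‖fderiv ℝ f y‖ₑ + ENNReal.ofReal (L / R) * ‖f y‖ₑ) := by
          rw [← lintegral_indicator hDm]; exact lintegral_mono hder
      _ = (∫⁻ y in D, ‖fderiv ℝ f y‖ₑ) + ENNReal.ofReal (L / R) * ∫⁻ y in D, ‖f y‖ₑ := by
          rw [lintegral_add_left (measurable_enorm_fderiv hf),
            lintegral_const_mul' _ _ ENNReal.ofReal_ne_top]
      _ ≤ ENNReal.ofReal ((2 * R) ^ ((n : ℝ) - 1)) * I +
          ENNReal.ofReal (L / R) * (ENNReal.ofReal (2 ^ (n + 1) * (2 * R) ^ n) * I) := by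
          gcongr
          · rw [hI, riesz_fderiv_eq]
            exact setLIntegral_le_kernel hn _ x (by positivity)
          · exact lintegral_ball_enorm_le hn hf hcf x (by positivity)
      _ = _ := by
          rw [← mul_assoc, ← ENNReal.ofReal_mul (by positivity), ← add_mul,
            ← ENNReal.ofReal_add (by positivity) (by positivity),
            Real.mul_rpow (by norm_num) hR.le, mul_pow, hRn]
          congr 2
          field_simp
  calc lorentzS1 n ((n : ℝ) / (n - 1)) (Q.indicator f)
      ≤ ENNReal.ofReal ((n : ℝ) / (n - 1)) * ∫⁻ t in Ioi (0 : ℝ),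
          volume {y : En n | t < |η y * f y|} ^ (1 / ((n : ℝ) / (n - 1))) := by
        unfold lorentzS1
        exact mul_le_mul_right (lintegral_mono hmono) _
    _ ≤ ENNReal.ofReal ((n : ℝ) / (n - 1)) * (ENNReal.ofReal C *
          (ENNReal.ofReal ((2 ^ ((n : ℝ) - 1) + L * (2 ^ (n + 1) * 2 ^ n)) *
            R ^ ((n : ℝ) - 1)) * I)) := by
        gcongr
        refine (hC _ (hη.mul hf) hcf.mul_left).trans ?_
        gcongr
    _ = _ := by
        rw [← mul_assoc, ← mul_assoc, ← ENNReal.ofReal_mul hs0, ← ENNReal.ofReal_mul (by positivity)]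
        congr 2
        ring

/-- pointwise bound `M_{n',1}f(x) ≤ c · I₁(|∇f|)(x)` for `f ∈ C_c^∞(ℝⁿ)`,
`n' = n/(n-1)`. -/
theorem statement12 (n : ℕ) (hn : 2 ≤ n) :
    ∃ c : ℝ, 0 < c ∧ ∀ f : En n → ℝ, ContDiff ℝ (⊤ : ℕ∞) f → HasCompactSupport f →
      ∀ x : En n,
        maximalLorentz n ((n : ℝ) / (n - 1)) f x ≤
          ENNReal.ofReal c * riesz n (fun y => ‖fderiv ℝ f y‖) x := by
  obtain ⟨C, hC0, hC⟩ := exists_local_lorentz_bound n hn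
  have hn' : (2 : ℝ) ≤ n := by exact_mod_cast hn
  refine ⟨C * (n : ℝ) ^ ((n : ℝ) - 1) + 1, by positivity, fun f hf hcf x => ?_⟩
  have hf1 : ContDiff ℝ 1 f := hf.of_le (by exact_mod_cast le_top)
  refine iSup_le fun a => iSup_le fun h => iSup_le fun hh => iSup_le fun hx => ?_
  have hb := hC f hf1 hcf x (n * h) (by positivity) _ (cube_subset_closedBall a x hh hx)
  have hvol : volume (cube a h) ^ (1 / ((n : ℝ) / (n - 1))) =
      ENNReal.ofReal (h ^ ((n : ℝ) - 1)) := by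
    rw [volume_cube a hh, ENNReal.ofReal_rpow_of_pos (by positivity), ← Real.rpow_natCast,
      ← Real.rpow_mul hh.le]
    congr 2
    field_simp
  have hpos : 0 < h ^ ((n : ℝ) - 1) := by positivity
  rw [hvol, ← ENNReal.ofReal_inv_of_pos hpos]
  calc _ ≤ ENNReal.ofReal (h ^ ((n : ℝ) - 1))⁻¹ *
        (ENNReal.ofReal (C * (n * h) ^ ((n : ℝ) - 1)) *
          riesz n (fun y => ‖fderiv ℝ f y‖) x) := by gcongr
    _ = ENNReal.ofReal (C * (n : ℝ) ^ ((n : ℝ) - 1)) *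
          riesz n (fun y => ‖fderiv ℝ f y‖) x := by
        rw [← mul_assoc, ← ENNReal.ofReal_mul (by positivity),
          Real.mul_rpow (by positivity) hh.le]
        congr 2
        field_simp
    _ ≤ _ := by gcongr; linarith
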